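/- arXiv:1910.04016 — 3 statements merged into one kernel-verified Lean document; each statement's English description precedes it below -/
import Mathlib

section
/- Let $N\ge 1$ be an integer and $L>0$, $T>0$ real numbers. For $t>0$ set $A_1(t):=(4\pi)^{-N/2}\int_{\{x\in\mathbb{R}^N:|x|<1/\sqrt t\}}e^{-|x|^2/4}\,dx$ and $C_N:=2/\Gamma(N/2)$ ($\Gamma$ the Euler Gamma function). Then $\int_0^{T}\frac{e^{-s}}{A_1(s/L^2)}\,ds = 1-\frac{e^{-T}}{A_1(T/L^2)}+\frac{C_N}{2^{N+1}}\int_0^{T/L^2} \frac{e^{-L^2 z-\frac{1}{4z}}}{A_1(z)^2}\, z^{-\frac{N+2}{2}}\,dz$. -/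
open MeasureTheory Real Set

open Filter Topology intervalIntegral in
lemma aux_ibp (P q : ℝ → ℝ) (k B : ℝ) (hB : 0 < B) (hP : ContinuousOn P (Icc 0 B))
    (hd : ∀ z ∈ Ioo 0 B, HasDerivAt P (q z) z) (hq : ∀ z ∈ Ioo 0 B, 0 ≤ q z) :
    k * ∫ z in (0:ℝ)..B, Real.exp (-(k * z)) * P z =
      P 0 - Real.exp (-(k * B)) * P B + ∫ z in (0:ℝ)..B, Real.exp (-(k * z)) * q z := by
  have hu : uIcc 0 B = Icc 0 B := uIcc_of_le hB.le
  have hec : Continuous fun z : ℝ => Real.exp (-(k * z)) := by fun_prop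
  have hqi : IntervalIntegrable q volume 0 B := by
    rw [intervalIntegrable_iff_integrableOn_Ioc_of_le hB.le]
    exact integrableOn_deriv_of_nonneg hP hd hq
  have h2 : IntervalIntegrable (fun z => Real.exp (-(k * z)) * q z) volume 0 B :=
    hqi.continuousOn_mul hec.continuousOn
  have h1 : IntervalIntegrable (fun z => Real.exp (-(k * z)) * P z) volume 0 B := by
    apply ContinuousOn.intervalIntegrable
    rw [hu]
    exact hec.continuousOn.mul hP
  have := integral_eq_sub_of_hasDeriv_right (a := 0) (b := B)
    (f := fun z => Real.exp (-(k * z)) * P z)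
    (f' := fun z => Real.exp (-(k * z)) * q z - k * (Real.exp (-(k * z)) * P z))
    (by rw [hu]; exact hec.continuousOn.mul hP)
    (by
      intro x hx
      rw [min_eq_left hB.le, max_eq_right hB.le] at hx
      have h0 : HasDerivAt (fun z : ℝ => Real.exp (-(k * z))) (Real.exp (-(k * x)) * (-(k * 1))) x :=
        (((hasDerivAt_id x).const_mul k).neg).exp
      have := h0.mul (hd x hx)
      refine HasDerivAt.hasDerivWithinAt ?_
      refine HasDerivAt.congr_deriv this ?_
      ring)
    (h2.sub (h1.const_mul k))
  rw [integral_sub h2 (h1.const_mul k), intervalIntegral.integral_const_mul] at this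
  simp at this
  linarith

open Filter Topology in
lemma aux_A (N : ℕ) (hN : 1 ≤ N) (A : ℝ → ℝ)
    (hA : ∀ t, 0 < t → A t =
      (1 / (4 * Real.pi) ^ ((N : ℝ) / 2)) *
        ∫ x in {x : EuclideanSpace ℝ (Fin N) | ‖x‖ < 1 / Real.sqrt t},
          Real.exp (-‖x‖ ^ 2 / 4)) :
    (∀ t, 0 < t → A t = (2 * ((2 / Real.Gamma ((N : ℝ) / 2)) / 2 ^ (N + 1))) *
      ∫ y in (0:ℝ)..1 / Real.sqrt t, y ^ (N - 1) * Real.exp (-y ^ 2 / 4)) ∧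
    Tendsto A (𝓝[>] 0) (𝓝 1) := by
  haveI : Nonempty (Fin N) := ⟨⟨0, hN⟩⟩
  have hN0 : (0:ℝ) < N := by exact_mod_cast hN
  have hv : (volume : Measure (EuclideanSpace ℝ (Fin N))).real (Metric.ball 0 1) =
      √π ^ N / Gamma (N / 2 + 1) := by
    rw [Measure.real, EuclideanSpace.volume_ball]
    simp
    positivity
  have hpi : (1 / (4 * Real.pi) ^ ((N : ℝ) / 2)) * (N * (√π ^ N / Gamma (N / 2 + 1))) =
      2 * ((2 / Real.Gamma ((N : ℝ) / 2)) / 2 ^ (N + 1)) := by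
    rw [Real.Gamma_add_one (by positivity)]
    have h1 : (4 * Real.pi) ^ ((N : ℝ) / 2) = 2 ^ N * √π ^ N := by
      rw [← mul_pow, ← Real.rpow_natCast, show (2:ℝ) * √π = √(4 * π) by
        rw [Real.sqrt_mul (by norm_num), show (4:ℝ) = 2 ^ 2 by norm_num]
        simp, Real.sqrt_eq_rpow, ← Real.rpow_mul (by positivity)]
      congr 1; ring
    rw [h1]
    have : 0 < Gamma ((N:ℝ) / 2) := Real.Gamma_pos_of_pos (by positivity)
    have : 0 < √π := by positivity
    field_simp
    ring
  have hG : ∫ x : EuclideanSpace ℝ (Fin N), Real.exp (-‖x‖ ^ 2 / 4) =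
      (4 * Real.pi) ^ ((N : ℝ) / 2) := by
    have := GaussianFourier.integral_rexp_neg_mul_sq_norm (V := EuclideanSpace ℝ (Fin N))
      (b := 1 / 4) (by norm_num)
    rw [finrank_euclideanSpace_fin] at this
    rw [show 4 * π = π / (1 / 4) by ring, ← this]
    congr 1; ext x; congr 1; ring
  have hGi : Integrable (fun x : EuclideanSpace ℝ (Fin N) => Real.exp (-‖x‖ ^ 2 / 4)) := by
    apply Integrable.of_integral_ne_zero
    rw [hG]; positivity
  have hI : IntegrableOn (fun y : ℝ => y ^ (N - 1) * Real.exp (-y ^ 2 / 4)) (Ioi 0) := by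
    have := (integrable_fun_norm_addHaar (volume : Measure (EuclideanSpace ℝ (Fin N)))
      (f := fun y => Real.exp (-y ^ 2 / 4))).1 hGi
    simpa using this
  have hrep : ∀ t, 0 < t → A t = (2 * ((2 / Real.Gamma ((N : ℝ) / 2)) / 2 ^ (N + 1))) *
      ∫ y in (0:ℝ)..1 / Real.sqrt t, y ^ (N - 1) * Real.exp (-y ^ 2 / 4) := by
    intro t ht
    have hr : 0 < 1 / √t := by positivity
    rw [hA t ht, ← hpi, mul_assoc]
    congr 1
    have hm : MeasurableSet {x : EuclideanSpace ℝ (Fin N) | ‖x‖ < 1 / Real.sqrt t} :=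
      measurableSet_lt measurable_norm measurable_const
    rw [← integral_indicator hm]
    have := integral_fun_norm_addHaar (volume : Measure (EuclideanSpace ℝ (Fin N)))
      (fun y => (Iio (1 / √t)).indicator (fun y => Real.exp (-y ^ 2 / 4)) y)
    rw [hv, finrank_euclideanSpace_fin] at this
    rw [mul_assoc]
    simp only [nsmul_eq_mul, smul_eq_mul] at this
    refine Eq.trans ?_ (this.trans ?_)
    · congr 1
    · congr 2
      rw [intervalIntegral.integral_of_le hr.le, integral_Ioc_eq_integral_Ioo, ← Ioi_inter_Iio,
        ← setIntegral_indicator measurableSet_Iio]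
      congr 1; ext y
      by_cases h : y ∈ Iio (1 / √t) <;> simp [indicator, h]
  refine ⟨hrep, ?_⟩
  have hb : Tendsto (fun t : ℝ => 1 / √t) (𝓝[>] 0) atTop := by
    simp only [one_div]
    apply tendsto_inv_nhdsGT_zero.comp
    rw [tendsto_nhdsWithin_iff]
    constructor
    · have := (Real.continuous_sqrt.tendsto 0).mono_left (nhdsWithin_le_nhds (s := Ioi 0))
      simpa using this
    · filter_upwards [self_mem_nhdsWithin] with t ht
      exact Real.sqrt_pos.2 ht
  have := (intervalIntegral_tendsto_integral_Ioi 0 hI hb).const_mul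
    (2 * ((2 / Real.Gamma ((N : ℝ) / 2)) / 2 ^ (N + 1)))
  have h1 : (2 * ((2 / Real.Gamma ((N : ℝ) / 2)) / 2 ^ (N + 1))) *
      (∫ y in Ioi (0:ℝ), y ^ (N - 1) * Real.exp (-y ^ 2 / 4)) = 1 := by
    have := integral_fun_norm_addHaar (volume : Measure (EuclideanSpace ℝ (Fin N)))
      (fun y => Real.exp (-y ^ 2 / 4))
    rw [hv, finrank_euclideanSpace_fin, hG] at this
    simp only [nsmul_eq_mul, smul_eq_mul] at this
    rw [← hpi, mul_assoc, mul_assoc, ← this]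
    have : 0 < (4 * Real.pi) ^ ((N : ℝ) / 2) := by positivity
    field_simp
  rw [h1] at this
  refine this.congr' ?_
  filter_upwards [self_mem_nhdsWithin] with t ht
  exact (hrep t ht).symm

lemma aux_deriv (N : ℕ) (hN : 1 ≤ N) (A : ℝ → ℝ) (c : ℝ)
    (hA : ∀ t, 0 < t → A t = (2 * c) *
      ∫ y in (0:ℝ)..1 / Real.sqrt t, y ^ (N - 1) * Real.exp (-y ^ 2 / 4)) (t : ℝ) (ht : 0 < t) :
    HasDerivAt A (-(c * (Real.exp (-(1 / (4 * t))) * t ^ (-(((N : ℝ) + 2) / 2))))) t := by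
  have hs : 0 < √t := Real.sqrt_pos.2 ht
  have hc : Continuous fun y : ℝ => y ^ (N - 1) * Real.exp (-y ^ 2 / 4) := by fun_prop
  have h1 := (hc.integral_hasStrictDerivAt 0 (1 / √t)).hasDerivAt
  have h2 : HasDerivAt (fun t => 1 / √t) (-(1 / (2 * √t)) / √t ^ 2) t := by
    simp only [one_div (√_)]
    exact (Real.hasDerivAt_sqrt ht.ne').inv hs.ne'
  have h3 := (h1.comp t h2).const_mul (2 * c)
  refine HasDerivAt.congr_of_eventuallyEq (f := fun t => (2 * c) *
      ∫ y in (0:ℝ)..1 / Real.sqrt t, y ^ (N - 1) * Real.exp (-y ^ 2 / 4)) ?_ ?_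
  · refine HasDerivAt.congr_deriv h3 ?_
    have e1 : t ^ (-(((N : ℝ) + 2) / 2)) = (1 / √t) ^ (N + 2) := by
      rw [one_div, ← Real.rpow_natCast, Real.sqrt_eq_rpow, ← Real.rpow_neg ht.le, ← Real.rpow_mul ht.le]
      congr 1; push_cast; ring
    have e2 : -(1 / (4 * t)) = -(1 / √t) ^ 2 / 4 := by
      rw [div_pow, Real.sq_sqrt ht.le]; field_simp
    rw [e1, e2]
    obtain ⟨m, rfl⟩ : ∃ m, N = m + 1 := ⟨N - 1, by omega⟩
    simp only [Nat.add_sub_cancel]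
    rw [show m + 1 + 2 = m + 3 by ring, pow_add]
    field_simp
  · filter_upwards [Ioi_mem_nhds ht] with s hs
    exact hA s hs

open Filter Topology in
/-- Integration by parts plus the change of variable `z = s/L²` in the extinction analysis:
`∫₀^T e^{-s}/A₁(s/L²) ds = 1 - e^{-T}/A₁(T/L²) + (C_N/2^{N+1}) ∫₀^{T/L²} e^{-L²z - 1/(4z)} A₁(z)^{-2} z^{-(N+2)/2} dz`
with `C_N = 2/Γ(N/2)`. -/
theorem extinction_integral_identity
    (N : ℕ) (hN : 1 ≤ N) (L T : ℝ) (hL : 0 < L) (hT : 0 < T)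
    (A : ℝ → ℝ)
    (hA : ∀ t, 0 < t → A t =
      (1 / (4 * Real.pi) ^ ((N : ℝ) / 2)) *
        ∫ x in {x : EuclideanSpace ℝ (Fin N) | ‖x‖ < 1 / Real.sqrt t},
          Real.exp (-‖x‖ ^ 2 / 4)) :
    (∫ s in Set.Ioo (0 : ℝ) T, Real.exp (-s) / A (s / L ^ 2)) =
      1 - Real.exp (-T) / A (T / L ^ 2) +
        ((2 / Real.Gamma ((N : ℝ) / 2)) / 2 ^ (N + 1)) *
          ∫ z in Set.Ioo (0 : ℝ) (T / L ^ 2),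
            Real.exp (-(L ^ 2 * z) - 1 / (4 * z)) / (A z) ^ 2 *
              z ^ (-(((N : ℝ) + 2) / 2)) := by
  obtain ⟨hrep, hlim⟩ := aux_A N hN A hA
  set c : ℝ := (2 / Real.Gamma ((N : ℝ) / 2)) / 2 ^ (N + 1) with hcdef
  have hN0 : (0:ℝ) < N := by exact_mod_cast hN
  have hc : 0 < c := by
    have : 0 < Gamma ((N:ℝ) / 2) := Real.Gamma_pos_of_pos (by positivity)
    positivity
  have hApos : ∀ t, 0 < t → 0 < A t := by
    intro t ht
    rw [hrep t ht]
    have hs : 0 < 1 / √t := by positivity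
    refine mul_pos (by positivity) (intervalIntegral.intervalIntegral_pos_of_pos_on ?_ ?_ hs)
    · exact Continuous.intervalIntegrable (by fun_prop) _ _
    · intro x hx
      have := hx.1
      positivity
  have hd := aux_deriv N hN A c hrep
  set B := T / L ^ 2 with hBdef
  have hB : 0 < B := by positivity
  have hLB : L ^ 2 * B = T := by rw [hBdef]; field_simp
  let P : ℝ → ℝ := fun z => if z ≤ 0 then 1 else (A z)⁻¹
  have hPe : ∀ z, 0 < z → P z = (A z)⁻¹ := fun z hz => if_neg (not_le.2 hz)
  have hPev : ∀ z, 0 < z → P =ᶠ[𝓝 z] fun z => (A z)⁻¹ := fun z hz => by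
    filter_upwards [Ioi_mem_nhds hz] with s hs
    exact hPe s hs
  have hPd : ∀ z, 0 < z → HasDerivAt P
      (c * (Real.exp (-(1 / (4 * z))) * z ^ (-(((N : ℝ) + 2) / 2))) / A z ^ 2) z := by
    intro z hz
    have := (hd z hz).inv (hApos z hz).ne'
    rw [neg_neg] at this
    exact this.congr_of_eventuallyEq (hPev z hz)
  have hPc : ContinuousOn P (Icc 0 B) := by
    intro z hz
    rcases hz.1.eq_or_lt with rfl | h
    · refine ContinuousWithinAt.mono (t := Ici 0) ?_ Icc_subset_Ici_self
      rw [← continuousWithinAt_Ioi_iff_Ici]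
      have h1 := hlim.inv₀ one_ne_zero
      have h0 : P 0 = 1⁻¹ := by simp [P]
      unfold ContinuousWithinAt
      rw [h0]
      refine h1.congr' ?_
      filter_upwards [self_mem_nhdsWithin] with s hs
      exact (hPe s hs).symm
    · exact (hPd z h).continuousAt.continuousWithinAt
  have key := aux_ibp P _ (L ^ 2) B hB hPc (fun z hz => hPd z hz.1) (fun z hz => by
    have := hz.1
    positivity)
  rw [hLB, hPe B hB, show P 0 = 1 by simp [P]] at key
  have e1 : (∫ s in Set.Ioo (0 : ℝ) T, Real.exp (-s) / A (s / L ^ 2)) =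
      L ^ 2 * ∫ z in (0:ℝ)..B, Real.exp (-(L ^ 2 * z)) * P z := by
    have := intervalIntegral.integral_comp_div (a := 0) (b := T)
      (fun z => Real.exp (-(L ^ 2 * z)) * P z) (c := L ^ 2) (by positivity)
    rw [zero_div, smul_eq_mul] at this
    rw [← this, intervalIntegral.integral_of_le hT.le, integral_Ioc_eq_integral_Ioo]
    refine setIntegral_congr_fun measurableSet_Ioo fun s hs => ?_
    have := hs.1
    rw [hPe _ (by positivity), div_eq_mul_inv]
    congr 2
    field_simp
  rw [e1, key, ← integral_const_mul, intervalIntegral.integral_of_le hB.le,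
    integral_Ioc_eq_integral_Ioo]
  congr 1
  refine setIntegral_congr_fun measurableSet_Ioo fun z hz => ?_
  rw [sub_eq_add_neg, Real.exp_add]
  ring
end

section
/- Let $N\ge 1$ be an integer, let $\theta>0$, $\delta>\theta$ and $0<\gamma<1$. For $\varepsilon\in(0,\min(1,\delta-\theta))$ set $T_\varepsilon:=\ln\frac{\delta-\theta}{\varepsilon}$, $L_\varepsilon:=\gamma\sqrt{T_\varepsilon\ln\frac{1}{\varepsilon}}$, and, with $A_1(z):=(4\pi)^{-N/2}\int_{\{x\in\mathbb{R}^N:|x|<1/\sqrt z\}}e^{-|x|^2/4}dx$, define $H_\varepsilon:=\int_0^{1/(\gamma^2\ln\frac{1}{\varepsilon})}\frac{e^{-L_\varepsilon^2 z-\frac{1}{4z}}}{A_1(z)^2}\,z^{-\frac{N+2}{2}}\,dz$. Then $\varepsilon=o(H_\varepsilon)$ as $\varepsilon\to0^+$; that is, for every constant $c>0$ there exists $\varepsilon_0>0$ such that $c\,\varepsilon<H_\varepsilon$ for all $\varepsilon\in(0,\varepsilon_0)$. -/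
open MeasureTheory Real Set

lemma gauss_int (N : ℕ) : Integrable (fun x : EuclideanSpace ℝ (Fin N) => Real.exp (-‖x‖ ^ 2 / 4)) := by
  have h := (GaussianFourier.integrable_cexp_neg_mul_sq_norm_add (b := (1/4 : ℂ))
    (V := EuclideanSpace ℝ (Fin N)) (by norm_num) 0 0).norm
  refine h.congr (Filter.Eventually.of_forall fun x => ?_)
  simp only [Complex.norm_exp]
  congr 1
  have : (-(1/4 : ℂ) * (‖x‖ : ℂ) ^ 2 + 0 * ((inner ℝ (0 : EuclideanSpace ℝ (Fin N)) x : ℝ) : ℂ))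
      = ((-‖x‖ ^ 2 / 4 : ℝ) : ℂ) := by
    push_cast; ring
  rw [this, Complex.ofReal_re]

lemma gauss_total (N : ℕ) : ∫ x : EuclideanSpace ℝ (Fin N), Real.exp (-‖x‖ ^ 2 / 4)
    = (4 * Real.pi) ^ ((N : ℝ) / 2) := by
  have h := GaussianFourier.integral_rexp_neg_mul_sq_norm (b := (1/4 : ℝ))
    (V := EuclideanSpace ℝ (Fin N)) (by norm_num)
  have e : Real.pi / (1/4) = 4 * Real.pi := by ring
  rw [e, finrank_euclideanSpace_fin] at h
  rw [← h]
  congr 1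
  ext x
  congr 1
  ring

lemma A_facts (N : ℕ) (A : ℝ → ℝ)
    (hA : ∀ z, 0 < z → A z =
      (1 / (4 * Real.pi) ^ ((N : ℝ) / 2)) *
        ∫ x in {x : EuclideanSpace ℝ (Fin N) | ‖x‖ < 1 / Real.sqrt z},
          Real.exp (-‖x‖ ^ 2 / 4)) :
    (∀ z, 0 < z → 0 < A z ∧ A z ≤ 1) ∧ AntitoneOn A (Ioi 0) := by
  have hp : 0 < (4 * Real.pi) ^ ((N : ℝ) / 2) := by positivity
  have hi := gauss_int N
  refine ⟨fun z hz => ⟨?_, ?_⟩, ?_⟩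
  · rw [hA z hz]
    refine mul_pos (by positivity) ?_
    rw [setIntegral_pos_iff_support_of_nonneg_ae
      (Filter.Eventually.of_forall fun x => (Real.exp_pos _).le) hi.integrableOn]
    have : (Function.support fun x : EuclideanSpace ℝ (Fin N) => Real.exp (-‖x‖ ^ 2 / 4)) = univ := by
      ext x; simp [(Real.exp_pos _).ne']
    rw [this, univ_inter]
    have hb : {x : EuclideanSpace ℝ (Fin N) | ‖x‖ < 1 / Real.sqrt z} = Metric.ball 0 (1 / Real.sqrt z) := by
      ext x; simp
    rw [hb]
    exact Metric.measure_ball_pos _ _ (by positivity)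
  · rw [hA z hz, one_div, inv_mul_le_iff₀ hp, mul_one, ← gauss_total]
    exact setIntegral_le_integral hi (Filter.Eventually.of_forall fun x => (Real.exp_pos _).le)
  · intro y hy z hz hyz
    rw [mem_Ioi] at hy hz
    rw [hA z hz, hA y hy]
    refine mul_le_mul_of_nonneg_left ?_ (by positivity)
    refine setIntegral_mono_set hi.integrableOn
      (Filter.Eventually.of_forall fun x => (Real.exp_pos _).le) ?_
    refine HasSubset.Subset.eventuallyLE ?_
    intro x hx
    simp only [mem_setOf_eq] at hx ⊢
    refine hx.trans_le ?_
    have := Real.sqrt_pos.2 hy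
    exact one_div_le_one_div_of_le this (Real.sqrt_le_sqrt hyz)

lemma integrand_int (N : ℕ) (A : ℝ → ℝ) (hpos : ∀ z, 0 < z → 0 < A z)
    (hanti : AntitoneOn A (Ioi 0)) (a Q : ℝ) (ha : 0 < a) (ha1 : a ≤ 1) (hQ : 0 ≤ Q) :
    IntegrableOn (fun z => Real.exp (-Q * z - 1 / (4 * z)) / (A z) ^ 2 * z ^ (-(((N : ℝ) + 2) / 2)))
      (Ioo 0 a) := by
  have hmA : AEMeasurable A (volume.restrict (Ioo 0 a)) :=
    aemeasurable_restrict_of_antitoneOn measurableSet_Ioo (hanti.mono fun x hx => hx.1)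
  have hAa := hpos a ha
  set n := N + 2
  refine ⟨?_, ?_⟩
  · refine AEMeasurable.aestronglyMeasurable ?_
    refine AEMeasurable.mul (AEMeasurable.div ?_ (hmA.pow_const 2)) ?_
    · exact Measurable.aemeasurable (by fun_prop)
    · exact Measurable.aemeasurable (by fun_prop)
  · refine HasFiniteIntegral.restrict_of_bounded (C := (n.factorial * 4 ^ n) / (A a) ^ 2)
      (by simp) ?_
    refine (ae_restrict_iff' measurableSet_Ioo).2 (Filter.Eventually.of_forall ?_)
    intro z hz
    have hz0 : 0 < z := hz.1
    have hAz : A a ≤ A z := hanti hz0 ha hz.2.le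
    have hAz0 := hpos z hz0
    rw [Real.norm_of_nonneg (by positivity)]
    have h1 : Real.exp (-Q * z - 1 / (4 * z)) ≤ Real.exp (- (1 / (4 * z))) := by
      apply Real.exp_le_exp.2
      nlinarith [mul_nonneg hQ hz0.le]
    have h2 : z ^ (-(((N : ℝ) + 2) / 2)) ≤ (1 / z) ^ n := by
      have : (1 / z) ^ n = z ^ (-(n : ℝ)) := by
        rw [Real.rpow_neg hz0.le, Real.rpow_natCast, one_div, inv_pow]
      rw [this]
      apply Real.rpow_le_rpow_of_exponent_ge hz0 (hz.2.le.trans ha1)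
      simp only [n]; push_cast
      have : (0:ℝ) ≤ N := by positivity
      linarith
    have h3 := Real.pow_div_factorial_le_exp (1 / (4 * z)) (by positivity) n
    have h4 : (1 / z) ^ n ≤ (n.factorial * 4 ^ n) * Real.exp (1 / (4 * z)) := by
      have e : (1 / z) ^ n = 4 ^ n * (1 / (4 * z)) ^ n := by
        rw [← mul_pow]; congr 1; field_simp
      rw [div_le_iff₀ (by positivity)] at h3
      rw [e]
      calc _ ≤ 4 ^ n * (Real.exp (1 / (4 * z)) * n.factorial) := by gcongr
        _ = _ := by ring
    calc _ ≤ Real.exp (- (1 / (4 * z))) / (A a) ^ 2 * ((n.factorial * 4 ^ n) * Real.exp (1 / (4 * z))) := by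
          gcongr
          exact h2.trans h4
      _ = (n.factorial * 4 ^ n) / (A a) ^ 2 * (Real.exp (- (1 / (4 * z))) * Real.exp (1 / (4 * z))) := by ring
      _ = _ := by rw [← Real.exp_add]; simp

/-- The key lower estimate in the extinction proof: with
`T_ε = ln((δ-θ)/ε)`, `L_ε = γ √(T_ε ln(1/ε))` and
`H_ε = ∫₀^{1/(γ² ln(1/ε))} e^{-L_ε² z - 1/(4z)} A₁(z)^{-2} z^{-(N+2)/2} dz`,
one has `ε = o(H_ε)` as `ε → 0⁺`. -/
theorem extinction_Heps_estimate
    (N : ℕ) (hN : 1 ≤ N) (θ δ γ : ℝ) (hθ : 0 < θ) (hδ : θ < δ)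
    (hγ0 : 0 < γ) (hγ1 : γ < 1)
    (A : ℝ → ℝ)
    (hA : ∀ z, 0 < z → A z =
      (1 / (4 * Real.pi) ^ ((N : ℝ) / 2)) *
        ∫ x in {x : EuclideanSpace ℝ (Fin N) | ‖x‖ < 1 / Real.sqrt z},
          Real.exp (-‖x‖ ^ 2 / 4))
    (H : ℝ → ℝ)
    (hH : ∀ ε, 0 < ε → ε < min 1 (δ - θ) →
      H ε = ∫ z in Set.Ioo (0 : ℝ) (1 / (γ ^ 2 * Real.log (1 / ε))),
        Real.exp (-(γ * Real.sqrt (Real.log ((δ - θ) / ε) * Real.log (1 / ε))) ^ 2 * z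
            - 1 / (4 * z)) / (A z) ^ 2 * z ^ (-(((N : ℝ) + 2) / 2))) :
    ∀ c : ℝ, 0 < c → ∃ ε₀ > (0 : ℝ), ∀ ε, 0 < ε → ε < ε₀ → ε < min 1 (δ - θ) →
      c * ε < H ε := by
  intro c hc
  obtain ⟨hA1, hanti⟩ := A_facts N A hA
  set k := Real.log (δ - θ) with hk
  set K := 2 * γ ^ 2 * Real.exp (k / 2) / (1 - γ) with hK
  set a := (1 - γ) / 2 with ha
  have hg : 0 < 1 - γ := by linarith
  have ha0 : 0 < a := by positivity
  have hK0 : 0 < K := by positivity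
  refine ⟨Real.exp (-(max (1 / γ ^ 2) (2 * c * K / a ^ 2))), Real.exp_pos _, ?_⟩
  intro ε hε hε0 hεm
  rw [hH ε hε hεm]
  have hε1 : ε < 1 := hεm.trans_le (min_le_left _ _)
  have hε2 : ε < δ - θ := hεm.trans_le (min_le_right _ _)
  have hl1 : Real.log (1 / ε) = - Real.log ε := by rw [one_div, Real.log_inv]
  have hT : Real.log ((δ - θ) / ε) = k + Real.log (1 / ε) := by
    rw [hl1, Real.log_div (by linarith) hε.ne']; ring
  have hT0 : 0 < Real.log ((δ - θ) / ε) := Real.log_pos (by rw [lt_div_iff₀ hε]; linarith)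
  have hεl : ε = Real.exp (-Real.log (1 / ε)) := by rw [hl1, neg_neg, Real.exp_log hε]
  set l := Real.log (1 / ε) with hl
  have hlM : max (1 / γ ^ 2) (2 * c * K / a ^ 2) < l := by
    rw [hεl, Real.exp_lt_exp] at hε0; linarith
  have hlA : 1 / γ ^ 2 < l := (le_max_left _ _).trans_lt hlM
  have hlB : 2 * c * K / a ^ 2 < l := (le_max_right _ _).trans_lt hlM
  have hl0 : 0 < l := lt_trans (by positivity) hlA
  rw [mul_pow, Real.sq_sqrt (by positivity), hT]
  rw [hT] at hT0
  have hup1 : 1 / (γ ^ 2 * l) ≤ 1 := by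
    rw [div_lt_iff₀ (by positivity)] at hlA
    rw [div_le_one (by positivity)]; linarith
  have hint := integrand_int N A (fun z hz => (hA1 z hz).1) hanti (1 / (γ ^ 2 * l))
    (γ ^ 2 * ((k + l) * l)) (by positivity) hup1 (by positivity)
  have hlt : 1 / (2 * γ * l) < 1 / (2 * γ ^ 2 * l) := by
    apply one_div_lt_one_div_of_lt (by positivity)
    have : γ ^ 2 < γ := by nlinarith
    nlinarith
  have hlt2 : 1 / (2 * γ ^ 2 * l) < 1 / (γ ^ 2 * l) := by
    apply one_div_lt_one_div_of_lt (by positivity)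
    nlinarith [show 0 < γ ^ 2 * l by positivity]
  have hsub : Ioo (1 / (2 * γ * l)) (1 / (2 * γ ^ 2 * l)) ⊆ Ioo 0 (1 / (γ ^ 2 * l)) := by
    intro z hz
    exact ⟨lt_trans (by positivity) hz.1, hz.2.trans hlt2⟩
  have hmono := setIntegral_mono_set hint
    ((ae_restrict_iff' measurableSet_Ioo).2 (Filter.Eventually.of_forall (fun z hz => by
      have hz0 : 0 < z := hz.1
      have := (hA1 z hz0).1
      simp only [Pi.zero_apply]
      positivity))) hsub.eventuallyLE
  refine lt_of_lt_of_le ?_ hmono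
  have hge := setIntegral_ge_of_const_le (μ := volume) (c := Real.exp (-((1 + γ) / 2 * l + k / 2)))
    (measurableSet_Ioo (a := 1 / (2 * γ * l)) (b := 1 / (2 * γ ^ 2 * l))) (by simp) ?_
    (hint.mono_set hsub)
  · refine lt_of_lt_of_le ?_ hge
    rw [Real.volume_real_Ioo_of_le hlt.le, smul_eq_mul]
    have e1 : 1 / (2 * γ ^ 2 * l) - 1 / (2 * γ * l) = (1 - γ) / (2 * γ ^ 2 * l) := by
      field_simp
    have e2 : Real.exp (-((1 + γ) / 2 * l + k / 2)) =
        Real.exp (-l) * Real.exp (a * l) / Real.exp (k / 2) := by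
      rw [← Real.exp_add, ← Real.exp_sub]; congr 1; rw [ha]; ring
    have e3 : (1 - γ) / (2 * γ ^ 2 * l) * (Real.exp (-l) * Real.exp (a * l) / Real.exp (k / 2))
        = Real.exp (a * l) / (K * l) * Real.exp (-l) := by
      rw [hK]; field_simp
    rw [e1, e2, e3, hεl]
    refine mul_lt_mul_of_pos_right ?_ (Real.exp_pos _)
    rw [lt_div_iff₀ (by positivity)]
    have h3 := Real.pow_div_factorial_le_exp (a * l) (by positivity) 2
    refine lt_of_lt_of_le ?_ h3
    rw [div_lt_iff₀ (by positivity)] at hlB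
    norm_num [Nat.factorial]
    nlinarith
  · intro z hz
    have hz0 : 0 < z := (hsub hz).1
    have hz1 : z ≤ 1 := (hsub hz).2.le.trans hup1
    obtain ⟨p, q⟩ := hA1 z hz0
    have h1 : Real.exp (-((1 + γ) / 2 * l + k / 2)) ≤
        Real.exp (-(γ ^ 2 * ((k + l) * l)) * z - 1 / (4 * z)) := by
      apply Real.exp_le_exp.2
      have i1 : γ ^ 2 * ((k + l) * l) * z ≤ (k + l) / 2 := by
        calc _ ≤ γ ^ 2 * ((k + l) * l) * (1 / (2 * γ ^ 2 * l)) := by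
              gcongr; exact hz.2.le
          _ = _ := by field_simp
      have i2 : 1 / (4 * z) ≤ γ * l / 2 := by
        have := hz.1
        rw [div_lt_iff₀ (by positivity)] at this
        rw [div_le_iff₀ (by positivity)]
        nlinarith
      linarith
    have h2 : 1 ≤ z ^ (-(((N : ℝ) + 2) / 2)) := by
      apply Real.one_le_rpow_of_pos_of_le_one_of_nonpos hz0 hz1
      have : (0:ℝ) ≤ N := by positivity
      linarith
    have h3 : (A z) ^ 2 ≤ 1 := pow_le_one₀ p.le q
    calc _ ≤ _ := h1
      _ ≤ Real.exp (-(γ ^ 2 * ((k + l) * l)) * z - 1 / (4 * z)) / (A z) ^ 2 :=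
        le_div_self (Real.exp_pos _).le (by positivity) h3
      _ ≤ _ := le_mul_of_one_le_right (by positivity) h2
end

section
/- Let $N\ge 1$ be an integer, let $\theta>0$, $\delta>\theta$ and $0<\gamma<1$. For $\varepsilon\in(0,\min(1,\delta-\theta))$ set $T_\varepsilon:=\ln\frac{\delta-\theta}{\varepsilon}$ and $L_\varepsilon:=\gamma\sqrt{T_\varepsilon\ln\frac{1}{\varepsilon}}$, and for $t>0$ define $A_{L_\varepsilon}(t):=(4\pi)^{-N/2}\int_{\{x\in\mathbb{R}^N:|x|<L_\varepsilon/\sqrt t\}}e^{-|x|^2/4}dx$. Then there exists $\varepsilon_0>0$ such that for every $\varepsilon\in(0,\varepsilon_0)$ one has $1+\frac{\varepsilon}{\theta}<\int_0^{T_\varepsilon}\frac{e^{-s}}{A_{L_\varepsilon}(s)}\,ds+\frac{e^{-T_\varepsilon}}{A_{L_\varepsilon}(T_\varepsilon)}$. -/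
open MeasureTheory Real Set

theorem aux_gauss (N : ℕ) :
    Integrable (fun x : EuclideanSpace ℝ (Fin N) => Real.exp (-‖x‖ ^ 2 / 4)) ∧
    ∫ x : EuclideanSpace ℝ (Fin N), Real.exp (-‖x‖ ^ 2 / 4) = (4 * Real.pi) ^ ((N : ℝ) / 2) := by
  have h := GaussianFourier.integral_rexp_neg_mul_sq_norm
    (V := EuclideanSpace ℝ (Fin N)) (b := 1 / 4) (by norm_num)
  have e : (fun x : EuclideanSpace ℝ (Fin N) => Real.exp (-(1/4) * ‖x‖ ^ 2)) =
      fun x => Real.exp (-‖x‖ ^ 2 / 4) := by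
    funext x; congr 1; ring
  have h2 : ∫ x : EuclideanSpace ℝ (Fin N), Real.exp (-‖x‖ ^ 2 / 4)
      = (4 * Real.pi) ^ ((N : ℝ) / 2) := by
    rw [← e, h]
    simp
    congr 1; ring
  refine ⟨?_, h2⟩
  apply Integrable.of_integral_ne_zero
  rw [h2]
  positivity

noncomputable def auxP (N : ℕ) (r : ℝ) : ℝ :=
  (1 / (4 * Real.pi) ^ ((N : ℝ) / 2)) *
        ∫ x in {x : EuclideanSpace ℝ (Fin N) | ‖x‖ < r}, Real.exp (-‖x‖ ^ 2 / 4)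

theorem auxP_mono (N : ℕ) : Monotone (auxP N) := by
  intro r s h
  unfold auxP
  refine mul_le_mul_of_nonneg_left ?_ (by positivity)
  apply setIntegral_mono_set (aux_gauss N).1.integrableOn
  · exact Filter.Eventually.of_forall fun x => (Real.exp_pos _).le
  · exact Filter.Eventually.of_forall fun x (hx : ‖x‖ < r) => lt_of_lt_of_le hx h

theorem aux_ball (N : ℕ) (r : ℝ) : {x : EuclideanSpace ℝ (Fin N) | ‖x‖ < r} = Metric.ball 0 r := by
  ext x; simp

theorem auxP_pos (N : ℕ) (r : ℝ) (hr : 0 < r) : 0 < auxP N r := by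
  unfold auxP
  refine mul_pos (by positivity) ?_
  rw [aux_ball, setIntegral_pos_iff_support_of_nonneg_ae]
  · have : Function.support (fun x : EuclideanSpace ℝ (Fin N) => Real.exp (-‖x‖ ^ 2 / 4)) = univ := by
      ext x; simp [Real.exp_ne_zero]
    rw [this, univ_inter]
    exact Metric.measure_ball_pos _ _ hr
  · exact Filter.Eventually.of_forall fun x => (Real.exp_pos _).le
  · exact (aux_gauss N).1.integrableOn

theorem auxP_tail (N : ℕ) (hN : 1 ≤ N) : ∃ C > (0:ℝ), ∀ r, 0 ≤ r →
    auxP N r ≤ 1 - C * Real.exp (-(r + 2) ^ 2 / 4) := by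
  obtain ⟨hi, hI⟩ := aux_gauss N
  set K : ℝ := (4 * Real.pi) ^ ((N : ℝ) / 2) with hK
  have hKpos : 0 < K := by positivity
  set v : ℝ := (volume (Metric.ball (0 : EuclideanSpace ℝ (Fin N)) 1)).toReal with hv
  have hvpos : 0 < v := ENNReal.toReal_pos (Metric.measure_ball_pos _ _ one_pos).ne'
    measure_ball_lt_top.ne
  refine ⟨v / K, by positivity, fun r hr => ?_⟩
  let c : EuclideanSpace ℝ (Fin N) := EuclideanSpace.single ⟨0, hN⟩ (r + 1)
  have hc : ‖c‖ = r + 1 := by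
    simp only [c, EuclideanSpace.norm_single, Real.norm_eq_abs]
    exact abs_of_nonneg (by linarith)
  have hms : MeasurableSet (Metric.ball (0 : EuclideanSpace ℝ (Fin N)) r) := measurableSet_ball
  have hsplit := integral_add_compl hms hi
  have hsub : Metric.ball c 1 ⊆ (Metric.ball (0 : EuclideanSpace ℝ (Fin N)) r)ᶜ := by
    intro x hx
    rw [Metric.mem_ball, dist_eq_norm] at hx
    simp only [mem_compl_iff, Metric.mem_ball, dist_zero_right, not_lt]
    have := norm_sub_norm_le c x
    rw [norm_sub_rev] at this
    linarith
  have h1 : ∫ x in Metric.ball c 1, Real.exp (-‖x‖ ^ 2 / 4) ≤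
      ∫ x in (Metric.ball (0 : EuclideanSpace ℝ (Fin N)) r)ᶜ, Real.exp (-‖x‖ ^ 2 / 4) := by
    apply setIntegral_mono_set hi.integrableOn
    · exact Filter.Eventually.of_forall fun x => (Real.exp_pos _).le
    · exact Filter.Eventually.of_forall hsub
  have h2 : v * Real.exp (-(r + 2) ^ 2 / 4) ≤ ∫ x in Metric.ball c 1, Real.exp (-‖x‖ ^ 2 / 4) := by
    have h3 : ∫ x in Metric.ball c 1, Real.exp (-(r + 2) ^ 2 / 4) =
        v * Real.exp (-(r + 2) ^ 2 / 4) := by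
      rw [setIntegral_const, smul_eq_mul, hv, Measure.real, Measure.addHaar_ball_center]
    rw [← h3]
    apply setIntegral_mono_on _ hi.integrableOn measurableSet_ball
    · intro x hx
      rw [Metric.mem_ball, dist_eq_norm] at hx
      have h4 : ‖x‖ ≤ r + 2 := by
        have := norm_sub_norm_le x c
        linarith
      apply Real.exp_le_exp.2
      have := pow_le_pow_left₀ (norm_nonneg x) h4 2
      linarith
    · exact integrableOn_const measure_ball_lt_top.ne
  unfold auxP
  rw [aux_ball, ← hK]
  have h5 : ∫ x in Metric.ball (0 : EuclideanSpace ℝ (Fin N)) r, Real.exp (-‖x‖ ^ 2 / 4) ≤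
    K - v * Real.exp (-(r + 2) ^ 2 / 4) := by linarith
  calc _ ≤ 1 / K * (K - v * Real.exp (-(r + 2) ^ 2 / 4)) :=
        mul_le_mul_of_nonneg_left h5 (by positivity)
    _ = _ := by field_simp

theorem aux_int (B : ℝ → ℝ) (T a τ : ℝ) (ha : 0 < a) (haT : a + 1 < T) (hτ : 0 ≤ τ)
    (hT : 0 < B T) (hanti : AntitoneOn B (Ioi 0)) (hle : ∀ s, 0 < s → B s ≤ 1)
    (hBa : B a ≤ 1 - τ) :
    1 + Real.exp (-(a + 1)) * τ ≤
      (∫ s in Ioo (0:ℝ) T, Real.exp (-s) / B s) + Real.exp (-T) / B T := by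
  have hTpos : 0 < T := by linarith
  have hpos : ∀ s ∈ Ioo 0 T, B T ≤ B s := fun s hs => hanti hs.1 hTpos hs.2.le
  have hint : IntegrableOn (fun s => Real.exp (-s) / B s) (Ioo 0 T) := by
    have hm : AEMeasurable B (volume.restrict (Ioo 0 T)) :=
      aemeasurable_restrict_of_antitoneOn measurableSet_Ioo (hanti.mono fun s hs => hs.1)
    have hm2 : AEStronglyMeasurable (fun s => Real.exp (-s) / B s) (volume.restrict (Ioo 0 T)) :=
      ((by fun_prop : Measurable fun s : ℝ => Real.exp (-s)).aemeasurable.div hm).aestronglyMeasurable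
    refine IntegrableOn.of_bound (C := 1 / B T) measure_Ioo_lt_top hm2 ?_
    rw [ae_restrict_iff' measurableSet_Ioo]
    refine Filter.Eventually.of_forall fun s hs => ?_
    have h := hpos s hs
    rw [Real.norm_of_nonneg (div_nonneg (Real.exp_pos _).le (hT.le.trans h))]
    exact div_le_div₀ zero_le_one (Real.exp_le_one_iff.2 (by linarith [hs.1])) hT h
  have hi1 : IntegrableOn (fun s : ℝ => Real.exp (-s)) (Ioo 0 T) :=
    ((by fun_prop : Continuous fun s : ℝ => Real.exp (-s)).integrableOn_Icc).mono_set Ioo_subset_Icc_self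
  have hi2 : IntegrableOn ((Icc a (a+1)).indicator fun _ : ℝ => Real.exp (-(a+1)) * τ) (Ioo 0 T) :=
    (integrableOn_const (measure_Ioo_lt_top.ne)).indicator measurableSet_Icc
  have hmain : ∫ s in Ioo (0:ℝ) T, (Real.exp (-s) +
      (Icc a (a+1)).indicator (fun _ : ℝ => Real.exp (-(a+1)) * τ) s) ≤
      ∫ s in Ioo (0:ℝ) T, Real.exp (-s) / B s := by
    apply setIntegral_mono_on (hi1.add hi2) hint measurableSet_Ioo
    intro s hs
    have hBs : 0 < B s := hT.trans_le (hpos s hs)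
    have hE := Real.exp_pos (-s)
    rw [le_div_iff₀ hBs, Pi.add_apply]
    by_cases h : s ∈ Icc a (a+1)
    · rw [indicator_of_mem h]
      have h1 : B s ≤ 1 - τ := (hanti ha hs.1 h.1).trans hBa
      have h2 : Real.exp (-(a+1)) ≤ Real.exp (-s) := Real.exp_le_exp.2 (by linarith [h.2])
      have h3 : Real.exp (-s) + Real.exp (-(a+1)) * τ ≤ Real.exp (-s) * (1 + τ) := by
        nlinarith
      calc _ ≤ (Real.exp (-s) * (1 + τ)) * (1 - τ) :=
            mul_le_mul h3 h1 hBs.le (by positivity)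
        _ ≤ _ := by nlinarith [mul_nonneg hE.le (sq_nonneg τ)]
    · rw [indicator_of_notMem h]
      have := hle s hs.1
      nlinarith
  rw [integral_add hi1 hi2, setIntegral_indicator measurableSet_Icc] at hmain
  have e1 : Ioo 0 T ∩ Icc a (a+1) = Icc a (a+1) :=
    inter_eq_right.2 fun x hx => ⟨by linarith [hx.1], by linarith [hx.2]⟩
  have e2 : ∫ s in Ioo (0:ℝ) T, Real.exp (-s) = 1 - Real.exp (-T) := by
    rw [← integral_Ioc_eq_integral_Ioo, ← intervalIntegral.integral_of_le hTpos.le,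
      intervalIntegral.integral_comp_neg (fun x => Real.exp x)]
    simp
  rw [e1, e2, setIntegral_const] at hmain
  simp at hmain
  have h6 : Real.exp (-T) ≤ Real.exp (-T) / B T := by
    rw [le_div_iff₀ hT]
    have := hle T hTpos
    nlinarith [Real.exp_pos (-T)]
  have e3 : -(a+1) = -1 + -a := by ring
  rw [e3] at *
  linarith

theorem extinction_condition_holds
    (N : ℕ) (hN : 1 ≤ N) (θ δ γ : ℝ) (hθ : 0 < θ) (hδ : θ < δ)
    (hγ0 : 0 < γ) (hγ1 : γ < 1)
    (A : ℝ → ℝ → ℝ)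
    (hA : ∀ l t, 0 < l → 0 < t → A l t =
      (1 / (4 * Real.pi) ^ ((N : ℝ) / 2)) *
        ∫ x in {x : EuclideanSpace ℝ (Fin N) | ‖x‖ < l / Real.sqrt t},
          Real.exp (-‖x‖ ^ 2 / 4)) :
    ∃ ε₀ > (0 : ℝ), ∀ ε, 0 < ε → ε < ε₀ → ε < min 1 (δ - θ) →
      1 + ε / θ <
        (∫ s in Set.Ioo (0 : ℝ) (Real.log ((δ - θ) / ε)),
            Real.exp (-s) /
              A (γ * Real.sqrt (Real.log ((δ - θ) / ε) * Real.log (1 / ε))) s) +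
          Real.exp (-Real.log ((δ - θ) / ε)) /
            A (γ * Real.sqrt (Real.log ((δ - θ) / ε) * Real.log (1 / ε)))
              (Real.log ((δ - θ) / ε)) := by
  obtain ⟨C, hC, htail⟩ := auxP_tail N hN
  set κ := Real.log (δ - θ) with hκ
  have hδθ : 0 < δ - θ := sub_pos.2 hδ
  have hg : 0 < 1 - γ := sub_pos.2 hγ1
  have hD : 0 < (1 - γ) * (1 - γ / 2) := mul_pos hg (by linarith)
  set M := -Real.log θ - Real.log C + 2 + 1 / (1 - γ) + γ * κ / 2 + (1 - γ) * γ * κ / 2 with hM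
  set Λ₀ := max (M / ((1 - γ) * (1 - γ / 2))) (2 * (1 + |κ|)) with hΛ₀
  refine ⟨Real.exp (-Λ₀), Real.exp_pos _, fun ε hε hε0 hεm => ?_⟩
  set Λ := Real.log (1 / ε) with hΛ
  have hΛ' : Real.log ε = -Λ := by rw [hΛ, one_div, Real.log_inv]; ring
  have hεexp : ε = Real.exp (-Λ) := by rw [← hΛ', Real.exp_log hε]
  have hlt : Λ₀ < Λ := by
    rw [hεexp, Real.exp_lt_exp] at hε0
    linarith
  have hl1 : M < Λ * ((1 - γ) * (1 - γ / 2)) :=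
    (div_lt_iff₀ hD).1 ((le_max_left _ _).trans_lt hlt)
  have hl2 : 2 * (1 + |κ|) < Λ := (le_max_right _ _).trans_lt hlt
  have hTeq : Real.log ((δ - θ) / ε) = Λ + κ := by
    rw [Real.log_div hδθ.ne' hε.ne', hΛ']; ring
  rw [hTeq]
  set T := Λ + κ with hT
  have hk1 := neg_abs_le κ
  have hk0 := abs_nonneg κ
  have hΛpos : 0 < Λ := by linarith
  have hTpos : 0 < T := by linarith
  set L := γ * Real.sqrt (T * Λ) with hL
  have hLpos : 0 < L := mul_pos hγ0 (Real.sqrt_pos.2 (mul_pos hTpos hΛpos))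
  have hAP : ∀ s, 0 < s → A L s = auxP N (L / Real.sqrt s) := fun s hs => hA L s hLpos hs
  set a := γ * Λ / 2 with ha
  have hapos : 0 < a := by positivity
  set R := L / Real.sqrt a with hR
  have hRpos : 0 < R := div_pos hLpos (Real.sqrt_pos.2 hapos)
  have hR2 : R ^ 2 = 2 * γ * T := by
    rw [hR, div_pow, Real.sq_sqrt hapos.le, hL, mul_pow, Real.sq_sqrt (mul_pos hTpos hΛpos).le, ha]
    field_simp
  have key := aux_int (A L) T a (C * Real.exp (-(R + 2) ^ 2 / 4)) hapos
    (by nlinarith) (by positivity)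
    (by rw [hAP T hTpos]; exact auxP_pos N _ (div_pos hLpos (Real.sqrt_pos.2 hTpos)))
    (by
      intro s hs t ht hst
      rw [hAP s hs, hAP t ht]
      exact auxP_mono N (div_le_div_of_nonneg_left hLpos.le (Real.sqrt_pos.2 hs)
        (Real.sqrt_le_sqrt hst)))
    (by
      intro s hs
      rw [hAP s hs]
      have := htail (L / Real.sqrt s) (by positivity)
      have : 0 < C * Real.exp (-(L / Real.sqrt s + 2) ^ 2 / 4) := by positivity
      linarith)
    (by rw [hAP a hapos]; exact htail R hRpos.le)
  refine lt_of_lt_of_le ?_ key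
  have hRle : R ≤ (1 - γ) / 4 * R ^ 2 + 1 / (1 - γ) := by
    have e : (1 - γ) / 4 * R ^ 2 + 1 / (1 - γ) - R = ((1 - γ) * R - 2) ^ 2 / (4 * (1 - γ)) := by
      field_simp; ring
    have : 0 ≤ ((1 - γ) * R - 2) ^ 2 / (4 * (1 - γ)) := by positivity
    linarith
  have hfin : ε / θ < Real.exp (-(a + 1)) * (C * Real.exp (-(R + 2) ^ 2 / 4)) := by
    have e1 : ε / θ = Real.exp (-Λ - Real.log θ) := by
      rw [Real.exp_sub, Real.exp_log hθ, ← hεexp]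
    have e2 : Real.exp (-(a + 1)) * (C * Real.exp (-(R + 2) ^ 2 / 4)) =
        Real.exp (-(a+1) + (Real.log C + -(R + 2) ^ 2 / 4)) := by
      rw [Real.exp_add, Real.exp_add, Real.exp_log hC]
    rw [e1, e2, Real.exp_lt_exp]
    have e3 : -(R + 2) ^ 2 / 4 = -(R ^ 2 / 4 + R + 1) := by ring
    rw [e3]
    rw [hR2] at hRle ⊢
    rw [hM] at hl1
    rw [ha]
    rw [hT] at hRle ⊢
    nlinarith
  linarith
end
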